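/- For every n ≥ 2, the word w = (b a^{n−1})^{n−2} b (that is, n−2 repetitions of the block consisting of one letter b followed by n−1 letters a, followed by one final letter b) is a reset word for the Černý automaton C_n: the induced map δ_w sends every state to 0. This word has length (n−1)². -/

import Mathlib

/-- The two-letter alphabet of the Černý automaton. -/
inductive Letter
  | a
  | b
deriving DecidableEq

/-- The action of a letter of the Černý automaton `C_n` on the state set `ZMod n`:
`a` sends `i` to `i + 1 (mod n)`, and `b` sends `n - 1` to `0` and fixes every other state. -/
def step (n : ℕ) : Letter → ZMod n → ZMod n
  | Letter.a, p => p + 1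
  | Letter.b, p => if p = -1 then 0 else p

/-- The map `δ_w` induced by a word `w`, applying letters left to right. -/
def run (n : ℕ) : List Letter → ZMod n → ZMod n
  | [], p => p
  | x :: w, p => run n w (step n x p)

/-- The word `(b a^{n-1})^{n-2} b`: `n - 2` repetitions of the block consisting of one
`b` followed by `n - 1` copies of `a`, followed by one final `b`. -/
def cernyWord (n : ℕ) : List Letter :=
  (List.replicate (n - 2) (Letter.b :: List.replicate (n - 1) Letter.a)).flatten ++ [Letter.b]

theorem run_append' (n : ℕ) (u v : List Letter) (p : ZMod n) :
    run n (u ++ v) p = run n v (run n u p) := by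
  induction u generalizing p with
  | nil => rfl
  | cons x u ih => exact ih _

theorem run_as (n k : ℕ) (p : ZMod n) :
    run n (List.replicate k Letter.a) p = p + k := by
  induction k generalizing p with
  | zero => simp [run]
  | succ k ih =>
    rw [List.replicate_succ]
    simp only [run, step, ih]
    push_cast
    ring

theorem run_block (n : ℕ) (hn : 2 ≤ n) (p : ZMod n) :
    run n (Letter.b :: List.replicate (n - 1) Letter.a) p = if p = -1 then -1 else p - 1 := by
  simp only [run, step, run_as]
  rw [Nat.cast_sub (by omega)]
  split_ifs <;> simp [sub_eq_add_neg]

theorem run_neg (n : ℕ) (hn : 2 ≤ n) (m : ℕ) :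
    run n ((List.replicate m (Letter.b :: List.replicate (n - 1) Letter.a)).flatten
      ++ [Letter.b]) (-1) = 0 := by
  induction m with
  | zero => simp [run, step]
  | succ m ih =>
    rw [List.replicate_succ, List.flatten_cons, List.append_assoc, run_append', run_block n hn,
      if_pos rfl, ih]

theorem run_le (n : ℕ) (hn : 2 ≤ n) (m k : ℕ) (hk : k ≤ m) :
    run n ((List.replicate m (Letter.b :: List.replicate (n - 1) Letter.a)).flatten
      ++ [Letter.b]) (k : ZMod n) = 0 := by
  induction m generalizing k with
  | zero =>
    obtain rfl : k = 0 := by omega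
    simp [run, step]
  | succ m ih =>
    rw [List.replicate_succ, List.flatten_cons, List.append_assoc, run_append', run_block n hn]
    split_ifs with h
    · exact run_neg n hn m
    · cases k with
      | zero => simpa using run_neg n hn m
      | succ k => simpa using ih k (by omega)

/-- For every `n ≥ 2`, the word `(b a^{n-1})^{n-2} b` is a reset word for the Černý
automaton `C_n`: the induced map sends every state to `0`. Its length is `(n - 1)²`. -/
theorem cerny_word_is_reset (n : ℕ) (hn : 2 ≤ n) :
    (∀ p : ZMod n, run n (cernyWord n) p = 0) ∧
    (cernyWord n).length = (n - 1) ^ 2 := by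
  refine ⟨fun p => ?_, ?_⟩
  · haveI : NeZero n := ⟨by omega⟩
    have hp := ZMod.val_lt p
    have hc := ZMod.natCast_zmod_val p
    by_cases h : p.val ≤ n - 2
    · rw [← hc]
      exact run_le n hn _ _ h
    · have h1 : p.val = n - 1 := by omega
      rw [h1, Nat.cast_sub (by omega)] at hc
      have : p = -1 := by rw [← hc]; simp
      rw [this]
      exact run_neg n hn _
  · obtain ⟨k, rfl⟩ := Nat.exists_eq_add_of_le' hn
    simp [cernyWord]
    ring
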